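/- arXiv:2312.16146 — 6 statements merged into one kernel-verified Lean document; each statement's English description precedes it below -/
import Mathlib

section
/- Let X be a topological space admitting a co-mixer, i.e., a continuous map τ : X × X × X → X such that τ(a,a,b) = τ(a,b,a) = τ(b,a,a) = b for all a, b ∈ X. Then for every point e ∈ X and every n ≥ 1, every element α of the n-th homotopy group πₙ(X, e) satisfies α * α = 1 (equivalently, 2α = 0 in additive notation). -/
/-!
The co-mixer gives a continuous binary operation `m a b = τ a b e` with `m a e = a`, `m e a = a` and
`m a a = e`. Applied pointwise to generalized loops it respects homotopy and commutes strictly with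
concatenation, so `m (f · c) (c · f) = (m f c) · (m c f) = f · f`, where `c` is the constant loop
(`comixerLoop_transAt`). Since `f · c` and `c · f` are both homotopic to `f`, the loop `f · f` is
homotopic to `m f f = c`.
-/

open scoped Topology Topology.Homotopy unitInterval

/-- The pointwise product of two generalized loops under a continuous binary operation `m` that
fixes the base point. -/
def comixerLoop {X N : Type*} [TopologicalSpace X] {e : X} (m : C(X × X, X)) (hm : m (e, e) = e)
    (f g : Ω^ N X e) : Ω^ N X e :=
  ⟨m.comp (f.1.prodMk g.1), fun y hy => by
    change m (f.1 y, g.1 y) = e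
    rw [f.2 y hy, g.2 y hy, hm]⟩

theorem comixerLoop_homotopic {X N : Type*} [TopologicalSpace X] {e : X} (m : C(X × X, X))
    (hm : m (e, e) = e) {f f' g g' : Ω^ N X e}
    (hf : GenLoop.Homotopic f f') (hg : GenLoop.Homotopic g g') :
    GenLoop.Homotopic (comixerLoop m hm f g) (comixerLoop m hm f' g') := by
  obtain ⟨F⟩ := hf
  obtain ⟨G⟩ := hg
  refine ⟨⟨⟨⟨fun p => m (F p, G p), by fun_prop⟩, fun y => ?_, fun y => ?_⟩, fun t y hy => ?_⟩⟩
  · simp [comixerLoop]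
  · simp [comixerLoop]
  · change m (F (t, y), G (t, y)) = m (f.1 y, g.1 y)
    rw [F.eq_fst t hy, G.eq_fst t hy]

theorem comixerLoop_transAt {X N : Type*} [TopologicalSpace X] [DecidableEq N] {e : X}
    (m : C(X × X, X)) (hm : m (e, e) = e) (i : N) (f f' g g' : Ω^ N X e) :
    comixerLoop m hm (GenLoop.transAt i f f') (GenLoop.transAt i g g') =
      GenLoop.transAt i (comixerLoop m hm f g) (comixerLoop m hm f' g') := by
  ext t
  change m (GenLoop.transAt i f f' t, GenLoop.transAt i g g' t) = _
  simp only [GenLoop.transAt, GenLoop.coe_copy]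
  split_ifs <;> rfl

/-- If a topological space `X` admits a co-mixer — a continuous ternary operation `τ`
with `τ a a b = τ a b a = τ b a a = b` for all `a b` — then every element of every
homotopy group `πₙ(X, e)` (`n ≥ 1`) squares to the identity. -/
theorem comixer_homotopyGroup_sq_eq_one {X : Type*} [TopologicalSpace X]
    (τ : X → X → X → X)
    (hτ : Continuous fun p : X × X × X => τ p.1 p.2.1 p.2.2)
    (h1 : ∀ a b : X, τ a a b = b)
    (h2 : ∀ a b : X, τ a b a = b)
    (h3 : ∀ a b : X, τ b a a = b)
    (e : X) (n : ℕ) (α : HomotopyGroup (Fin (n + 1)) X e) :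
    α * α = 1 := by
  let m : C(X × X, X) := ⟨fun p => τ p.1 p.2 e,
    hτ.comp (by fun_prop : Continuous fun p : X × X => (p.1, p.2, e))⟩
  have hm : m (e, e) = e := h1 e e
  induction α using Quotient.inductionOn with
  | h f =>
  have hfc : GenLoop.Homotopic (GenLoop.transAt 0 f GenLoop.const) f :=
    Quotient.exact ((HomotopyGroup.mul_spec (i := 0)).symm.trans
      (one_mul (M := HomotopyGroup (Fin (n + 1)) X e) ⟦f⟧))
  have hcf : GenLoop.Homotopic (GenLoop.transAt 0 GenLoop.const f) f :=
    Quotient.exact ((HomotopyGroup.mul_spec (i := 0)).symm.trans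
      (mul_one (M := HomotopyGroup (Fin (n + 1)) X e) ⟦f⟧))
  have h := comixerLoop_homotopic m hm hfc hcf
  rw [comixerLoop_transAt] at h
  have e1 : comixerLoop m hm f GenLoop.const = f := GenLoop.ext _ _ fun y => h3 e (f y)
  have e2 : comixerLoop m hm GenLoop.const f = f := GenLoop.ext _ _ fun y => h2 e (f y)
  have e3 : comixerLoop m hm f f = GenLoop.const := GenLoop.ext _ _ fun y => h1 (f y) e
  rw [e1, e2, e3] at h
  exact (HomotopyGroup.mul_spec (i := 0)).trans (Quotient.sound h)
end

section
/- Let (X, d) be a metric space and φ : [0,1] → X a homeomorphism from the unit interval onto X with φ(0) = a and φ(1) = b. Suppose the total variation of φ on [0,1] is infinite, but the total variation of φ on [ε, 1] is finite for every ε > 0. Then every Lipschitz map f : X → X with f(b) = a is constant, identically equal to a. -/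
open scoped NNReal

/-!
Transport `f` to `g = φ⁻¹ ∘ f ∘ φ : [0,1] → [0,1]`, a continuous map with `g 1 = 0`. If `f` is not
constantly `a`, then `g s > 0` for some `s > 0`. By the intermediate value theorem `g` maps `[s,1]`
onto a set containing `[0, g s]`, and sending `y` to the last time in `[s,1]` at which `g` takes the
value `y` is an antitone section of `g` (`exists_antitone_section`). Hence the variation of `φ` on
`[0, g s]` is at most that of `f ∘ φ` on `[s,1]`, which is at most `K` times that of `φ` on `[s,1]`,
so it is finite. As `φ` also has finite variation on `[g s, 1]`, it has finite variation on `[0,1]`,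
a contradiction.
-/

/-- A continuous self-map of `[0,1]` vanishing at `1` has, over `[0, g s]`, an antitone section with
values in `[s, 1]`: the last time at which a given value is attained. -/
lemma exists_antitone_section (g : Set.Icc (0 : ℝ) 1 → Set.Icc (0 : ℝ) 1) (hg : Continuous g)
    (hg1 : g 1 = 0) (s : Set.Icc (0 : ℝ) 1) :
    ∃ v : Set.Icc (0 : ℝ) 1 → Set.Icc (0 : ℝ) 1,
      AntitoneOn v (Set.Iic (g s)) ∧ Set.MapsTo v (Set.Iic (g s)) (Set.Ici s) ∧
        ∀ y ∈ Set.Iic (g s), g (v y) = y := by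
  have hmax : ∀ y : Set.Icc (0 : ℝ) 1, ∃ v, y ≤ g s → IsGreatest {t | s ≤ t ∧ y ≤ g t} v := by
    intro y
    by_cases hy : y ≤ g s
    · have hc : IsClosed {t | s ≤ t ∧ y ≤ g t} :=
        isClosed_Ici.inter (isClosed_Ici.preimage hg)
      obtain ⟨v, hv⟩ := hc.isCompact.exists_isGreatest ⟨s, le_rfl, hy⟩
      exact ⟨v, fun _ => hv⟩
    · exact ⟨0, fun h => absurd h hy⟩
  choose v hv using hmax
  refine ⟨v, ?_, fun y hy => (hv y hy).1.1, ?_⟩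
  · intro y hy z hz hyz
    exact (hv y hy).2 ⟨(hv z hz).1.1, hyz.trans (hv z hz).1.2⟩
  · intro y hy
    -- The intermediate value theorem on `[v y, 1]` yields a time `w ≥ v y` with `g w = y`;
    -- maximality of `v y` forces `w = v y`.
    obtain ⟨w, hw, hgw⟩ := intermediate_value_Icc' (a := v y) (b := 1) unitInterval.le_one'
      hg.continuousOn ⟨hg1 ▸ unitInterval.nonneg', (hv y hy).1.2⟩
    have hwv : w ≤ v y := (hv y hy).2 ⟨(hv y hy).1.1.trans hw.1, hgw.ge⟩
    rw [← le_antisymm hwv hw.1, hgw]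

/-- If `X` is a metric arc, parametrized by a homeomorphism `φ : [0,1] ≃ₜ X` with endpoints
`a = φ 0`, `b = φ 1`, which is unrectifiable but whose restriction to `[ε, 1]` is rectifiable
for every `ε > 0`, then any Lipschitz self-map of `X` sending `b` to `a` is identically `a`. -/
theorem lipschitz_map_on_unrectifiable_arc_const {X : Type*} [MetricSpace X]
    (φ : Set.Icc (0 : ℝ) 1 ≃ₜ X) (a b : X)
    (ha : φ ⟨0, by norm_num⟩ = a) (hb : φ ⟨1, by norm_num⟩ = b)
    (hvar : eVariationOn (fun t => φ t) Set.univ = ⊤)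
    (hvarε : ∀ ε : ℝ, 0 < ε →
      eVariationOn (fun t => φ t) {t : Set.Icc (0 : ℝ) 1 | ε ≤ (t : ℝ)} ≠ ⊤)
    (f : X → X) (K : ℝ≥0) (hf : LipschitzWith K f) (hfb : f b = a) :
    ∀ x : X, f x = a := by
  obtain ⟨g, hg⟩ : ∃ g : Set.Icc (0 : ℝ) 1 → Set.Icc (0 : ℝ) 1, g = fun t => φ.symm (f (φ t)) :=
    ⟨_, rfl⟩
  have hφg : ∀ t, φ (g t) = f (φ t) := fun t => by simp [hg]
  have hgc : Continuous g := by
    rw [hg]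
    exact φ.symm.continuous.comp (hf.continuous.comp φ.continuous)
  have hg1 : g 1 = 0 := by
    apply φ.injective
    rw [hφg]
    exact ((congrArg f hb).trans hfb).trans ha.symm
  by_contra! hne
  obtain ⟨x, hx⟩ := hne
  obtain ⟨t, rfl⟩ := φ.surjective x
  have ht : 0 < g t := by
    refine lt_of_le_of_ne unitInterval.nonneg' fun h => hx ?_
    rw [← hφg, ← h]
    exact ha
  -- Since `t` itself may be `0`, move to a later time: a value strictly between `0` and `g t` is
  -- attained after `t`.
  obtain ⟨s, hs, hgs⟩ : ∃ s, 0 < s ∧ 0 < g s := by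
    obtain ⟨y, hy0, hyt⟩ := exists_between ht
    obtain ⟨w, hw, hgw⟩ := intermediate_value_Icc' (a := t) (b := 1) unitInterval.le_one'
      hgc.continuousOn ⟨hg1 ▸ hy0.le, hyt.le⟩
    refine ⟨w, unitInterval.nonneg'.trans_lt (lt_of_le_of_ne hw.1 ?_), hgw ▸ hy0⟩
    rintro rfl
    exact hyt.ne' hgw
  obtain ⟨v, hanti, hmaps, hsec⟩ := exists_antitone_section g hgc hg1 s
  have hIci : ∀ r : Set.Icc (0 : ℝ) 1, 0 < r → eVariationOn (fun t => φ t) (Set.Ici r) ≠ ⊤ :=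
    fun r hr => hvarε r hr
  have hIic : eVariationOn (fun t => φ t) (Set.Iic (g s)) ≠ ⊤ := by
    have h1 : eVariationOn (fun t => φ t) (Set.Iic (g s))
        = eVariationOn ((fun t => f (φ t)) ∘ v) (Set.Iic (g s)) := by
      refine eVariationOn.congr fun y hy => ?_
      simp only [Function.comp]
      rw [← hφg, hsec y hy]
    have h2 := eVariationOn.comp_le_of_antitoneOn (fun t => f (φ t)) v hanti hmaps
    have h3 : eVariationOn (fun t => f (φ t)) (Set.Ici s)
        ≤ K * eVariationOn (fun t => φ t) (Set.Ici s) :=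
      (hf.lipschitzOnWith (s := Set.univ)).comp_eVariationOn_le (Set.mapsTo_univ _ _)
    rw [h1]
    exact ne_top_of_le_ne_top (ENNReal.mul_ne_top ENNReal.coe_ne_top (hIci s hs)) (h2.trans h3)
  have hsplit := eVariationOn.union (fun t => φ t) (isGreatest_Iic (a := g s))
    (isLeast_Ici (a := g s))
  rw [Set.Iic_union_Ici, hvar] at hsplit
  exact ENNReal.add_ne_top.2 ⟨hIic, hIci _ hgs⟩ hsplit.symm
end

section
/- Let (X, d) be a metric space and φ : [0,1] → X a homeomorphism from the unit interval onto X such that the total variation of φ on [0,1] is infinite while the total variation of φ on [ε, 1] is finite for every ε > 0. Then X admits no Lipschitz co-mixer: there is no constant L ≥ 0 and map τ : X × X × X → X that is L-Lipschitz in each variable separately and satisfies τ(a,a,b) = τ(a,b,a) = τ(b,a,a) = b for all a, b ∈ X. -/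
open scoped NNReal

/-!
Any co-mixer yields a map swapping two given points: `x ↦ τ x a b` sends `a` to `b` and `b` to `a`.
Take `a = φ 0` and `b = φ 1`, and let `g` be the resulting self-map of `[0,1]`, read through `φ`; it
is continuous with `g 0 = 1` and `g 1 = 0`. Choose `t > 0` with `s = g t > 0`. On `[t,1]` the path
`φ ∘ g` is a Lipschitz image of the rectifiable path `φ`, so it has finite variation. But on `[t,1]`
the function `g` descends from `s` to `0`, so this path has to traverse the whole subarc
`φ([0,s])`, which has infinite length
(`eVariationOn_Iic_le_comp_of_continuous` makes this precise).
-/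

/-- The last-exit map `u ↦ max {x ≥ t | u ≤ g x}` is an antitone right inverse of `g`
on `[0, g t]`; reparametrizing by it compares the two variations. -/
theorem eVariationOn_Iic_le_comp_of_continuous {X : Type*} [PseudoEMetricSpace X]
    (f : Set.Icc (0 : ℝ) 1 → X) {g : Set.Icc (0 : ℝ) 1 → Set.Icc (0 : ℝ) 1}
    (hg : Continuous g) (hg1 : g 1 = 0) (t : Set.Icc (0 : ℝ) 1) :
    eVariationOn f (Set.Iic (g t)) ≤ eVariationOn (f ∘ g) (Set.Ici t) := by
  have key : ∀ u : Set.Icc (0 : ℝ) 1, ∃ r, u ≤ g t →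
      IsGreatest {x | t ≤ x ∧ u ≤ g x} r := by
    intro u
    by_cases hu : u ≤ g t
    · have hc : IsClosed {x | t ≤ x ∧ u ≤ g x} :=
        isClosed_Ici.inter (isClosed_Ici.preimage hg)
      obtain ⟨r, hr⟩ := hc.isCompact.exists_isGreatest ⟨t, le_rfl, hu⟩
      exact ⟨r, fun _ => hr⟩
    · exact ⟨t, fun h => absurd h hu⟩
  choose r hr using key
  have hgr : ∀ u, u ≤ g t → g (r u) = u := by
    intro u hu
    obtain ⟨⟨htr, hur⟩, hmax⟩ := hr u hu
    have h1 : g 1 ≤ u := hg1 ▸ u.2.1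
    obtain ⟨y, hy, hyu⟩ :=
      intermediate_value_Icc' (show r u ≤ 1 from (r u).2.2) hg.continuousOn ⟨h1, hur⟩
    have : y = r u := le_antisymm (hmax ⟨htr.trans hy.1, hyu.ge⟩) hy.1
    exact this ▸ hyu
  have hanti : AntitoneOn r (Set.Iic (g t)) := fun u hu v hv huv =>
    (hr u hu).2 ⟨(hr v hv).1.1, huv.trans (hr v hv).1.2⟩
  calc eVariationOn f (Set.Iic (g t))
      = eVariationOn ((f ∘ g) ∘ r) (Set.Iic (g t)) :=
        eVariationOn.congr fun u hu => by simp [hgr u hu]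
    _ ≤ eVariationOn (f ∘ g) (Set.Ici t) :=
        eVariationOn.comp_le_of_antitoneOn _ r hanti fun u hu => (hr u hu).1.1

/-- A metric arc `X` (homeomorphic image of `[0,1]`) that is unrectifiable but whose
subarcs `φ([ε,1])`, `ε > 0`, are all rectifiable admits no Lipschitz co-mixer. -/
theorem unrectifiable_arc_no_lipschitz_comixer {X : Type*} [MetricSpace X]
    (φ : Set.Icc (0 : ℝ) 1 ≃ₜ X)
    (hvar : eVariationOn (fun t => φ t) Set.univ = ⊤)
    (hvarε : ∀ ε : ℝ, 0 < ε →
      eVariationOn (fun t => φ t) {t : Set.Icc (0 : ℝ) 1 | ε ≤ (t : ℝ)} ≠ ⊤) :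
    ¬ ∃ (L : ℝ≥0) (τ : X → X → X → X),
        (∀ b c : X, LipschitzWith L fun a => τ a b c) ∧
        (∀ a c : X, LipschitzWith L fun b => τ a b c) ∧
        (∀ a b : X, LipschitzWith L fun c => τ a b c) ∧
        (∀ a b : X, τ a a b = b) ∧ (∀ a b : X, τ a b a = b) ∧ (∀ a b : X, τ b a a = b) := by
  rintro ⟨L, τ, hL, -, -, h1, h2, -⟩
  have hfin : ∀ t : Set.Icc (0 : ℝ) 1, 0 < t → eVariationOn φ (Set.Ici t) ≠ ⊤ :=
    fun t ht => hvarε t ht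
  have hinf : ∀ s : Set.Icc (0 : ℝ) 1, 0 < s → eVariationOn φ (Set.Iic s) = ⊤ := by
    intro s hs
    have h := eVariationOn.union (φ : Set.Icc (0 : ℝ) 1 → X) (isGreatest_Iic (a := s)) isLeast_Ici
    rw [Set.Iic_union_Ici, show eVariationOn φ Set.univ = ⊤ from hvar] at h
    exact (ENNReal.add_eq_top.1 h.symm).resolve_right (hfin s hs)
  have hF : LipschitzWith L fun x => τ x (φ 0) (φ 1) := hL _ _
  set g : Set.Icc (0 : ℝ) 1 → Set.Icc (0 : ℝ) 1 := fun t => φ.symm (τ (φ t) (φ 0) (φ 1)) with hgdef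
  have hg : Continuous g := φ.symm.continuous.comp (hF.continuous.comp φ.continuous)
  have hg0 : g 0 = 1 := by simp [hgdef, h1]
  have hg1 : g 1 = 0 := by simp [hgdef, h2]
  obtain ⟨t, ht, hgt⟩ : ∃ t : Set.Icc (0 : ℝ) 1, 0 < t ∧ 0 < g t := by
    -- a point where `g` equals `1/2` works: it is not `0`, since `g 0 = 1`
    obtain ⟨t, -, ht⟩ := intermediate_value_Icc' (zero_le_one (α := Set.Icc (0 : ℝ) 1))
      hg.continuousOn (show (⟨1 / 2, by norm_num, by norm_num⟩ : Set.Icc (0 : ℝ) 1) ∈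
        Set.Icc (g 1) (g 0) by
          rw [hg0, hg1]
          exact ⟨Subtype.coe_le_coe.1 (by norm_num), Subtype.coe_le_coe.1 (by norm_num)⟩)
    refine ⟨t, lt_of_le_of_ne t.2.1 ?_, ?_⟩
    · rintro rfl
      rw [hg0] at ht
      have := congrArg Subtype.val ht
      norm_num at this
    · rw [ht]
      exact Subtype.coe_lt_coe.1 (by norm_num)
  have hle := eVariationOn_Iic_le_comp_of_continuous φ hg hg1 t
  have hcomp : (φ ∘ g) = (fun x => τ x (φ 0) (φ 1)) ∘ φ := by
    funext x
    simp [hgdef]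
  rw [hinf _ hgt, hcomp] at hle
  have hlip := (hF.lipschitzOnWith (s := Set.univ)).comp_eVariationOn_le
    (g := φ) (Set.mapsTo_univ _ (Set.Ici t))
  exact ENNReal.mul_ne_top ENNReal.coe_ne_top (hfin t ht) (top_le_iff.1 (hle.trans hlip))
end

section
/- Let X be a real normed space and define the incenter mixer σ : X × X × X → X by σ(a,b,c) = (‖b-c‖·a + ‖a-c‖·b + ‖a-b‖·c) / (‖b-c‖ + ‖a-c‖ + ‖a-b‖) whenever a, b, c are not all equal, and σ(a,a,a) = a. Then σ is 1-Lipschitz in each variable separately; in particular, ‖σ(a,b,c) - σ(a,b,c')‖ ≤ ‖c - c'‖ for all a, b, c, c' ∈ X. -/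
/-!
By symmetry only the third variable matters. Fix `a, b` and write `L = ‖a - b‖`,
`p = ‖b - c‖`, `q = ‖a - c‖`, `S = p + q + L`, `s = σ(a,b,c)`, with primes for the quantities
belonging to `c'`. Since `S s = p a + q b + L c` and `S' s' = p' a + q' b + L c'`,
`S' (s' - s) = (p' - p)(a - s) + (q' - q)(b - s) + L (c' - c)`.
Here `|p' - p|, |q' - q| ≤ ‖c' - c‖`, `S ‖a - s‖ ≤ 2 q L` and `S ‖b - s‖ ≤ 2 p L`, so
`S S' ‖s' - s‖ ≤ L (3 S - 2 L) ‖c' - c‖`. As `S ≥ 2 L`, we have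
`S ^ 2 - L (3 S - 2 L) = (S - L)(S - 2 L) ≥ 0`, which gives the claim when `S ≤ S'`; this may
be assumed after exchanging `c` and `c'`.
-/

open scoped Classical in
/-- The incenter mixer on a real normed space:
`σ(a,b,c) = (‖b-c‖a + ‖a-c‖b + ‖a-b‖c)/(‖b-c‖ + ‖a-c‖ + ‖a-b‖)` for `a, b, c` not all
equal, and `σ(a,a,a) = a`. -/
noncomputable def incenterMixer {X : Type*} [NormedAddCommGroup X] [NormedSpace ℝ X]
    (a b c : X) : X :=
  if a = b ∧ b = c then a
  else (‖b - c‖ + ‖a - c‖ + ‖a - b‖)⁻¹ • (‖b - c‖ • a + ‖a - c‖ • b + ‖a - b‖ • c)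

section

variable {X : Type*} [NormedAddCommGroup X] [NormedSpace ℝ X]

theorem incenterMixer_swap_left (a b c : X) : incenterMixer a b c = incenterMixer b a c := by
  unfold incenterMixer
  by_cases h : a = b ∧ b = c
  · obtain ⟨rfl, rfl⟩ := h
    rfl
  · have h' : ¬ (b = a ∧ a = c) := fun ⟨h₁, h₂⟩ => h ⟨h₁.symm, h₁.trans h₂⟩
    rw [if_neg h, if_neg h', norm_sub_rev b a, add_comm ‖b - c‖ ‖a - c‖,
      add_comm (‖b - c‖ • a) (‖a - c‖ • b)]

theorem incenterMixer_swap_right (a b c : X) : incenterMixer a b c = incenterMixer a c b := by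
  unfold incenterMixer
  by_cases h : a = b ∧ b = c
  · obtain ⟨rfl, rfl⟩ := h
    rfl
  · have h' : ¬ (a = c ∧ c = b) := fun ⟨h₁, h₂⟩ => h ⟨h₁.trans h₂, h₂.symm⟩
    rw [if_neg h, if_neg h', norm_sub_rev c b, add_right_comm ‖b - c‖ ‖a - c‖,
      add_right_comm (‖b - c‖ • a) (‖a - c‖ • b)]

/-- The defining formula with the denominator cleared; it also holds for `a = b = c`, where
both sides vanish. -/
theorem smul_incenterMixer (a b c : X) :
    (‖b - c‖ + ‖a - c‖ + ‖a - b‖) • incenterMixer a b c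
      = ‖b - c‖ • a + ‖a - c‖ • b + ‖a - b‖ • c := by
  unfold incenterMixer
  by_cases h : a = b ∧ b = c
  · obtain ⟨rfl, rfl⟩ := h
    simp
  · rw [if_neg h, smul_inv_smul₀]
    intro h0
    have h₁ := norm_nonneg (b - c)
    have h₂ := norm_nonneg (a - c)
    have h₃ := norm_nonneg (a - b)
    exact h ⟨sub_eq_zero.1 (norm_eq_zero.1 (by linarith)),
      sub_eq_zero.1 (norm_eq_zero.1 (by linarith))⟩

/-- The distance from a vertex to the incenter is at most `2 q L / S`, where `q`, `L` are the
lengths of the sides at that vertex and `S` is the perimeter. -/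
theorem norm_sub_incenterMixer_le (a b c : X) :
    (‖b - c‖ + ‖a - c‖ + ‖a - b‖) * ‖a - incenterMixer a b c‖ ≤ 2 * ‖a - c‖ * ‖a - b‖ := by
  have hS : 0 ≤ ‖b - c‖ + ‖a - c‖ + ‖a - b‖ := by positivity
  have h : (‖b - c‖ + ‖a - c‖ + ‖a - b‖) • (a - incenterMixer a b c)
      = ‖a - c‖ • (a - b) + ‖a - b‖ • (a - c) := by
    rw [smul_sub, smul_incenterMixer]
    module
  calc _ = ‖‖a - c‖ • (a - b) + ‖a - b‖ • (a - c)‖ := by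
        rw [← h, norm_smul, Real.norm_of_nonneg hS]
    _ ≤ ‖‖a - c‖ • (a - b)‖ + ‖‖a - b‖ • (a - c)‖ := norm_add_le _ _
    _ = _ := by
        rw [norm_smul, norm_smul, norm_norm, norm_norm]
        ring

/-- The Lipschitz bound in the third variable, when passing from `c` to `c'` does not decrease
the perimeter. -/
theorem incenterMixer_lipschitz_of_perimeter_le (a b c c' : X)
    (hle : ‖b - c‖ + ‖a - c‖ + ‖a - b‖ ≤ ‖b - c'‖ + ‖a - c'‖ + ‖a - b‖) :
    ‖incenterMixer a b c' - incenterMixer a b c‖ ≤ ‖c' - c‖ := by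
  rcases eq_or_ne a b with rfl | hab
  · -- By absorption both values are `a`.
    have key : ∀ x : X, incenterMixer a a x = a := by
      intro x
      rcases eq_or_ne a x with rfl | hx
      · simp [incenterMixer]
      · have h := norm_sub_incenterMixer_le a a x
        have hpos : 0 < ‖a - x‖ := norm_pos_iff.2 (sub_ne_zero.2 hx)
        rw [sub_self, norm_zero, mul_zero, add_zero] at h
        have h0 : ‖a - incenterMixer a a x‖ ≤ 0 := by
          by_contra! hc
          nlinarith [mul_pos hpos hc]
        exact (sub_eq_zero.1 (norm_le_zero_iff.1 h0)).symm
    simp [key]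
  have hL : 0 < ‖a - b‖ := norm_pos_iff.2 (sub_ne_zero.2 hab)
  have hA := norm_sub_incenterMixer_le a b c
  have hB := norm_sub_incenterMixer_le b a c
  rw [incenterMixer_swap_left b a c, norm_sub_rev b a, add_comm ‖a - c‖ ‖b - c‖] at hB
  have hs := smul_incenterMixer a b c
  have hs' := smul_incenterMixer a b c'
  have hp : |‖b - c'‖ - ‖b - c‖| ≤ ‖c' - c‖ := by
    have h := abs_norm_sub_norm_le (b - c') (b - c)
    rwa [sub_sub_sub_cancel_left, norm_sub_rev c c'] at h
  have hq : |‖a - c'‖ - ‖a - c‖| ≤ ‖c' - c‖ := by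
    have h := abs_norm_sub_norm_le (a - c') (a - c)
    rwa [sub_sub_sub_cancel_left, norm_sub_rev c c'] at h
  have htri : ‖a - b‖ ≤ ‖b - c‖ + ‖a - c‖ := by
    have h := norm_sub_le_norm_sub_add_norm_sub a c b
    rw [norm_sub_rev c b] at h
    linarith
  generalize incenterMixer a b c = s at *
  generalize incenterMixer a b c' = s' at *
  have hid : (‖b - c'‖ + ‖a - c'‖ + ‖a - b‖) • (s' - s)
      = (‖b - c'‖ - ‖b - c‖) • (a - s) + (‖a - c'‖ - ‖a - c‖) • (b - s)
        + ‖a - b‖ • (c' - c) := by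
    linear_combination (norm := module) hs' - hs
  have hS' : 0 ≤ ‖b - c'‖ + ‖a - c'‖ + ‖a - b‖ := by positivity
  have hn : (‖b - c'‖ + ‖a - c'‖ + ‖a - b‖) * ‖s' - s‖
      ≤ ‖c' - c‖ * ‖a - s‖ + ‖c' - c‖ * ‖b - s‖ + ‖a - b‖ * ‖c' - c‖ := by
    rw [← Real.norm_of_nonneg hS', ← norm_smul, hid]
    refine (norm_add₃_le).trans ?_
    rw [norm_smul, norm_smul, norm_smul, norm_norm, Real.norm_eq_abs, Real.norm_eq_abs]
    gcongr
  have hp0 := norm_nonneg (b - c)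
  have hq0 := norm_nonneg (a - c)
  have hd := norm_nonneg (c' - c)
  have he := norm_nonneg (s' - s)
  generalize ‖b - c'‖ + ‖a - c'‖ + ‖a - b‖ = S' at *
  generalize ‖b - c‖ = p at *
  generalize ‖a - c‖ = q at *
  generalize ‖a - b‖ = L at *
  generalize ‖c' - c‖ = d at *
  generalize ‖s' - s‖ = e at *
  generalize ‖a - s‖ = u at *
  generalize ‖b - s‖ = v at *
  have hS : 0 < p + q + L := by linarith
  have h1 : (p + q + L) * e ≤ d * u + d * v + L * d :=
    (mul_le_mul_of_nonneg_right hle he).trans hn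
  have h2 : (p + q + L) ^ 2 * e ≤ d * (L * (3 * (p + q) + L)) := by
    nlinarith [mul_le_mul_of_nonneg_left h1 hS.le, mul_le_mul_of_nonneg_left hA hd,
      mul_le_mul_of_nonneg_left hB hd]
  -- This is `(S - L)(S - 2 L) ≥ 0` for `S = p + q + L`.
  have h3 : L * (3 * (p + q) + L) ≤ (p + q + L) ^ 2 := by
    nlinarith [mul_nonneg (add_nonneg hp0 hq0) (sub_nonneg.2 htri)]
  refine le_of_mul_le_mul_left ?_ (pow_pos hS 2)
  nlinarith [mul_le_mul_of_nonneg_left h3 hd]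

theorem incenterMixer_lipschitz_third (a b c d : X) :
    ‖incenterMixer a b c - incenterMixer a b d‖ ≤ ‖c - d‖ := by
  rcases le_total (‖b - c‖ + ‖a - c‖ + ‖a - b‖) (‖b - d‖ + ‖a - d‖ + ‖a - b‖) with h | h
  · rw [norm_sub_rev, norm_sub_rev c d]
    exact incenterMixer_lipschitz_of_perimeter_le a b c d h
  · exact incenterMixer_lipschitz_of_perimeter_le a b d c h

end

/-- The incenter mixer on a real normed space is `1`-Lipschitz in each variable separately. -/
theorem incenterMixer_lipschitz {X : Type*} [NormedAddCommGroup X] [NormedSpace ℝ X] :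
    (∀ a a' b c : X, ‖incenterMixer a b c - incenterMixer a' b c‖ ≤ ‖a - a'‖) ∧
    (∀ a b b' c : X, ‖incenterMixer a b c - incenterMixer a b' c‖ ≤ ‖b - b'‖) ∧
    (∀ a b c c' : X, ‖incenterMixer a b c - incenterMixer a b c'‖ ≤ ‖c - c'‖) := by
  refine ⟨fun a a' b c => ?_, fun a b b' c => ?_, incenterMixer_lipschitz_third⟩
  · rw [incenterMixer_swap_left a, incenterMixer_swap_left a', incenterMixer_swap_right b a,
      incenterMixer_swap_right b a']
    exact incenterMixer_lipschitz_third b c a a'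
  · rw [incenterMixer_swap_right a b, incenterMixer_swap_right a b']
    exact incenterMixer_lipschitz_third a c b b'
end

section
/- Let X be a real normed space, σ the incenter mixer on X, and τ(a,b,c) = a + b + c - 2σ(a,b,c) the Nagel co-mixer. Then for all a, b, c ∈ X, the point τ(a,b,c) belongs to the convex hull of the set {a, b, c}. -/
/-- The Nagel co-mixer `τ(a,b,c) = a + b + c - 2σ(a,b,c)` on a real normed space. -/
noncomputable def nagelComixer {X : Type*} [NormedAddCommGroup X] [NormedSpace ℝ X]
    (a b c : X) : X :=
  a + b + c - (2 : ℝ) • incenterMixer a b c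

/-- The Nagel co-mixer of `a, b, c` lies in the convex hull of `{a, b, c}`. -/
theorem nagelComixer_mem_convexHull {X : Type*} [NormedAddCommGroup X] [NormedSpace ℝ X]
    (a b c : X) : nagelComixer a b c ∈ convexHull ℝ ({a, b, c} : Set X) := by
  have mem : ∀ x ∈ ({a, b, c} : Set X), x ∈ convexHull ℝ ({a, b, c} : Set X) :=
    fun x hx => subset_convexHull ℝ _ hx
  by_cases h : a = b ∧ b = c
  · have hτ : nagelComixer a b c = a := by
      obtain ⟨rfl, rfl⟩ := h
      simp only [nagelComixer, incenterMixer, and_self, if_true]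
      module
    rw [hτ]
    exact mem a (by simp)
  · have hp : ‖b - c‖ ≤ ‖a - c‖ + ‖a - b‖ := by
      linarith [norm_sub_le_norm_sub_add_norm_sub b a c, norm_sub_rev a b]
    have hq : ‖a - c‖ ≤ ‖a - b‖ + ‖b - c‖ := norm_sub_le_norm_sub_add_norm_sub a b c
    have hr : ‖a - b‖ ≤ ‖a - c‖ + ‖b - c‖ := by
      linarith [norm_sub_le_norm_sub_add_norm_sub a c b, norm_sub_rev b c]
    have hs : 0 < ‖b - c‖ + ‖a - c‖ + ‖a - b‖ := by
      by_cases hab : a = b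
      · have : 0 < ‖b - c‖ := norm_sub_pos_iff.2 fun hbc => h ⟨hab, hbc⟩
        positivity
      · have : 0 < ‖a - b‖ := norm_sub_pos_iff.2 hab
        positivity
    have hτ : nagelComixer a b c = a + b + c - (2 : ℝ) •
        ((‖b - c‖ + ‖a - c‖ + ‖a - b‖)⁻¹ •
          (‖b - c‖ • a + ‖a - c‖ • b + ‖a - b‖ • c)) := by
      rw [nagelComixer, incenterMixer, if_neg h]
    rw [hτ]
    generalize ‖b - c‖ = p at *
    generalize ‖a - c‖ = q at *
    generalize ‖a - b‖ = r at *
    -- The barycentric weights of the Nagel point.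
    have key := (convex_convexHull ℝ ({a, b, c} : Set X)).sum_mem
      (t := Finset.univ)
      (w := ![(q + r - p) / (p + q + r), (p + r - q) / (p + q + r), (p + q - r) / (p + q + r)])
      (z := ![a, b, c])
      (by
        intro i _
        fin_cases i <;> exact div_nonneg (by linarith) hs.le)
      (by
        simp only [Fin.sum_univ_three, Matrix.cons_val]
        field_simp
        ring)
      (by
        intro i _
        fin_cases i <;> exact mem _ (by simp))
    convert key using 1
    simp only [Fin.sum_univ_three, Matrix.cons_val]
    match_scalars <;> field_simp <;> ring
end

section
/- Let (X, d) be a metric space, L ≥ 0, and let σ, τ : X × X × X → X be maps that are symmetric (invariant under all permutations of the three arguments) and L-Lipschitz in each variable separately, with σ satisfying the absorption property σ(a,a,b) = a and τ satisfying the anti-absorption property τ(a,a,b) = b for all a, b ∈ X. Then for all a, b, c, a', b', c' ∈ X, the Hausdorff distance satisfies d_H({σ(a,b,c), τ(a,b,c)}, {σ(a',b',c'), τ(a',b',c')}) ≤ 9L · d_H({a,b,c}, {a',b',c'}). Moreover, if the set {a,b,c} has at most two elements, then {σ(a,b,c), τ(a,b,c)} = {a,b,c}. -/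
/-!
Let `r` be the Hausdorff distance of the two triples, and join `x ∈ {a, b, c}` to
`x' ∈ {a', b', c'}` when `dist x x' ≤ r`. The triples are finite, so `r` is attained and every
point is joined to some point of the other triple. By Hall's theorem for `3 + 3` vertices
(`matching_or_star`), up to relabelling one of two things happens.

* There is a perfect matching. Changing one argument at a time gives
  `dist (σ a b c) (σ a' b' c') ≤ 3 * L * r`, and likewise for `τ`.
* Two points `x, y` of the first triple are joined to a common `x'`, and the third point `z` is
  joined to both remaining points `y', z'`. Replacing `x, y` by `x'`, absorption puts `σ a b c`
  within `2 * L * r` of `x'` and `τ a b c` within `2 * L * r` of `z`; replacing `y', z'` by `z`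
  puts `σ a' b' c'` within `2 * L * r` of `z` and `τ a' b' c'` within `2 * L * r` of `x'`.
  Thus `σ` is close to `τ'` and `τ` to `σ'`, within `4 * L * r`.

Either way the constant is at most `9 * L` (in fact `4 * L`).
-/

open scoped NNReal

/-- Each point of a finite set lies within the Hausdorff distance of some point of the other. -/
lemma exists_dist_le_hausdorffDist {X : Type*} [MetricSpace X] {s t : Set X}
    (hs : s.Finite) (ht : t.Finite) (hs0 : s.Nonempty) (ht0 : t.Nonempty) {x : X} (hx : x ∈ s) :
    ∃ y ∈ t, dist x y ≤ Metric.hausdorffDist s t := by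
  obtain ⟨y, hy, h⟩ := ht.isCompact.exists_infDist_eq_dist ht0 x
  refine ⟨y, hy, h ▸ Metric.infDist_le_hausdorffDist_of_mem hx ?_⟩
  exact Metric.hausdorffEDist_ne_top_of_nonempty_of_bounded hs0 ht0 hs.isBounded ht.isBounded

lemma hausdorffDist_pair_le {X : Type*} [MetricSpace X] {p q p' q' : X} {K : ℝ}
    (hp : dist p p' ≤ K) (hq : dist q q' ≤ K) :
    Metric.hausdorffDist ({p, q} : Set X) {p', q'} ≤ K := by
  refine Metric.hausdorffDist_le_of_mem_dist (dist_nonneg.trans hp) ?_ ?_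
  · rintro x (rfl | rfl)
    · exact ⟨p', by simp, hp⟩
    · exact ⟨q', by simp, hq⟩
  · rintro x (rfl | rfl)
    · exact ⟨p, by simp, by rwa [dist_comm]⟩
    · exact ⟨q, by simp, by rwa [dist_comm]⟩

/-- A map that is `L`-Lipschitz in each of three variables moves by at most `L` times the sum of
the displacements of its arguments. -/
lemma dist_le_of_separately_lipschitz {X : Type*} [MetricSpace X] {L : ℝ≥0} {f : X → X → X → X}
    (h1 : ∀ b c : X, LipschitzWith L fun a => f a b c)
    (h2 : ∀ a c : X, LipschitzWith L fun b => f a b c)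
    (h3 : ∀ a b : X, LipschitzWith L fun c => f a b c) (a b c a' b' c' : X) :
    dist (f a b c) (f a' b' c') ≤ L * (dist a a' + dist b b' + dist c c') := by
  have e1 : dist (f a b c) (f a' b c) ≤ L * dist a a' := (h1 b c).dist_le_mul a a'
  have e2 : dist (f a' b c) (f a' b' c) ≤ L * dist b b' := (h2 a' c).dist_le_mul b b'
  have e3 : dist (f a' b' c) (f a' b' c') ≤ L * dist c c' := (h3 a' b').dist_le_mul c c'
  have := dist_triangle4 (f a b c) (f a' b c) (f a' b' c) (f a' b' c')
  linarith

/-- A bipartite graph on `3 + 3` vertices without isolated vertices contains a perfect matching or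
two disjoint stars with two edges each, centred on opposite sides. Here `Rij` says that left vertex
`i` is joined to right vertex `j`. -/
lemma matching_or_star (R11 R12 R13 R21 R22 R23 R31 R32 R33 : Prop)
    (r1 : R11 ∨ R12 ∨ R13) (r2 : R21 ∨ R22 ∨ R23) (r3 : R31 ∨ R32 ∨ R33)
    (c1 : R11 ∨ R21 ∨ R31) (c2 : R12 ∨ R22 ∨ R32) (c3 : R13 ∨ R23 ∨ R33) :
    (R11 ∧ R22 ∧ R33) ∨ (R11 ∧ R23 ∧ R32) ∨ (R12 ∧ R21 ∧ R33) ∨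
    (R12 ∧ R23 ∧ R31) ∨ (R13 ∧ R21 ∧ R32) ∨ (R13 ∧ R22 ∧ R31) ∨
    (R11 ∧ R21 ∧ R32 ∧ R33) ∨ (R12 ∧ R22 ∧ R31 ∧ R33) ∨ (R13 ∧ R23 ∧ R31 ∧ R32) ∨
    (R11 ∧ R31 ∧ R22 ∧ R23) ∨ (R12 ∧ R32 ∧ R21 ∧ R23) ∨ (R13 ∧ R33 ∧ R21 ∧ R22) ∨
    (R21 ∧ R31 ∧ R12 ∧ R13) ∨ (R22 ∧ R32 ∧ R11 ∧ R13) ∨ (R23 ∧ R33 ∧ R11 ∧ R12) := by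
  grind

/-- Given a symmetric mixer `σ` and a symmetric co-mixer `τ` on a metric space, both
`L`-Lipschitz in each variable separately, the map `{a,b,c} ↦ {σ(a,b,c), τ(a,b,c)}` is a
`9L`-Lipschitz retraction (in the Hausdorff metric) from triples onto pairs. -/
theorem retraction_from_mixer_comixer {X : Type*} [MetricSpace X] (L : ℝ≥0)
    (σ τ : X → X → X → X)
    (hσsymm : ∀ a b c : X, σ a b c = σ a c b ∧ σ a b c = σ b a c ∧ σ a b c = σ b c a ∧
      σ a b c = σ c a b ∧ σ a b c = σ c b a)
    (hτsymm : ∀ a b c : X, τ a b c = τ a c b ∧ τ a b c = τ b a c ∧ τ a b c = τ b c a ∧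
      τ a b c = τ c a b ∧ τ a b c = τ c b a)
    (hσlip1 : ∀ b c : X, LipschitzWith L fun a => σ a b c)
    (hσlip2 : ∀ a c : X, LipschitzWith L fun b => σ a b c)
    (hσlip3 : ∀ a b : X, LipschitzWith L fun c => σ a b c)
    (hτlip1 : ∀ b c : X, LipschitzWith L fun a => τ a b c)
    (hτlip2 : ∀ a c : X, LipschitzWith L fun b => τ a b c)
    (hτlip3 : ∀ a b : X, LipschitzWith L fun c => τ a b c)
    (hσabs : ∀ a b : X, σ a a b = a)
    (hτabs : ∀ a b : X, τ a a b = b) :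
    (∀ a b c a' b' c' : X,
      Metric.hausdorffDist ({σ a b c, τ a b c} : Set X) ({σ a' b' c', τ a' b' c'} : Set X) ≤
        9 * L * Metric.hausdorffDist ({a, b, c} : Set X) ({a', b', c'} : Set X)) ∧
    (∀ a b c : X, (a = b ∨ a = c ∨ b = c) →
      ({σ a b c, τ a b c} : Set X) = ({a, b, c} : Set X)) := by
  refine ⟨fun a b c a' b' c' => ?_, ?_⟩
  · set r := Metric.hausdorffDist ({a, b, c} : Set X) ({a', b', c'} : Set X) with hr
    have hLr : 0 ≤ L * r := mul_nonneg L.2 Metric.hausdorffDist_nonneg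
    have row : ∀ x ∈ ({a, b, c} : Set X), dist x a' ≤ r ∨ dist x b' ≤ r ∨ dist x c' ≤ r := by
      intro x hx
      obtain ⟨y, hy, h⟩ := exists_dist_le_hausdorffDist (t := {a', b', c'})
        (by simp) (by simp) (by simp) (by simp) hx
      rcases hy with rfl | rfl | rfl <;> simp only [hr, h, true_or, or_true]
    have col : ∀ x ∈ ({a', b', c'} : Set X), dist a x ≤ r ∨ dist b x ≤ r ∨ dist c x ≤ r := by
      intro x hx
      obtain ⟨y, hy, h⟩ := exists_dist_le_hausdorffDist (t := {a, b, c})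
        (by simp) (by simp) (by simp) (by simp) hx
      rw [dist_comm, Metric.hausdorffDist_comm] at h
      rcases hy with rfl | rfl | rfl <;> simp only [hr, h, true_or, or_true]
    have dσ := dist_le_of_separately_lipschitz hσlip1 hσlip2 hσlip3
    have dτ := dist_le_of_separately_lipschitz hτlip1 hτlip2 hτlip3
    -- The equations on `σ` and `τ` say that the arguments are relabellings of the given triples.
    have matched : ∀ x y z x' y' z' : X, σ x y z = σ a b c → τ x y z = τ a b c →
        σ x' y' z' = σ a' b' c' → τ x' y' z' = τ a' b' c' →
        dist x x' ≤ r ∧ dist y y' ≤ r ∧ dist z z' ≤ r →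
        Metric.hausdorffDist ({σ a b c, τ a b c} : Set X) {σ a' b' c', τ a' b' c'}
          ≤ 9 * L * r := by
      rintro x y z x' y' z' e1 e2 e3 e4 ⟨hx, hy, hz⟩
      rw [← e1, ← e2, ← e3, ← e4]
      have hL : L * (dist x x' + dist y y' + dist z z') ≤ L * (r + r + r) := by gcongr
      exact hausdorffDist_pair_le (by linarith [dσ x y z x' y' z'])
        (by linarith [dτ x y z x' y' z'])
    have star : ∀ x y z x' y' z' : X, σ x y z = σ a b c → τ x y z = τ a b c →
        σ x' y' z' = σ a' b' c' → τ x' y' z' = τ a' b' c' →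
        dist x x' ≤ r ∧ dist y x' ≤ r ∧ dist z y' ≤ r ∧ dist z z' ≤ r →
        Metric.hausdorffDist ({σ a b c, τ a b c} : Set X) {σ a' b' c', τ a' b' c'}
          ≤ 9 * L * r := by
      rintro x y z x' y' z' e1 e2 e3 e4 ⟨hx, hy, hy', hz'⟩
      rw [← e1, ← e2, ← e3, ← e4]
      have hL : L * (dist x x' + dist y x') ≤ L * (r + r) := by gcongr
      have hL' : L * (dist z y' + dist z z') ≤ L * (r + r) := by gcongr
      have s1 := dσ x y z x' x' z
      have t1 := dτ x y z x' x' z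
      have s2 := dσ x' z z x' y' z'
      have t2 := dτ x' z z x' y' z'
      rw [hσabs, dist_self, add_zero] at s1
      rw [hτabs, dist_self, add_zero] at t1
      rw [(hσsymm x' z z).2.2.1, hσabs, dist_self, zero_add] at s2
      rw [(hτsymm x' z z).2.2.1, hτabs, dist_self, zero_add] at t2
      rw [Set.pair_comm (σ x' y' z')]
      exact hausdorffDist_pair_le
        (by linarith [dist_triangle (σ x y z) x' (τ x' y' z')])
        (by linarith [dist_triangle (τ x y z) z (σ x' y' z')])
    have sa := hσsymm a b c
    have ta := hτsymm a b c
    have sa' := hσsymm a' b' c'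
    have ta' := hτsymm a' b' c'
    rcases matching_or_star _ _ _ _ _ _ _ _ _ (row a (by simp)) (row b (by simp))
        (row c (by simp)) (col a' (by simp)) (col b' (by simp)) (col c' (by simp)) with
      h | h | h | h | h | h | h | h | h | h | h | h | h | h | h
    · exact matched a b c a' b' c' (by grind) (by grind) (by grind) (by grind) h
    · exact matched a b c a' c' b' (by grind) (by grind) (by grind) (by grind) h
    · exact matched a b c b' a' c' (by grind) (by grind) (by grind) (by grind) h
    · exact matched a b c b' c' a' (by grind) (by grind) (by grind) (by grind) h
    · exact matched a b c c' a' b' (by grind) (by grind) (by grind) (by grind) h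
    · exact matched a b c c' b' a' (by grind) (by grind) (by grind) (by grind) h
    · exact star a b c a' b' c' (by grind) (by grind) (by grind) (by grind) h
    · exact star a b c b' a' c' (by grind) (by grind) (by grind) (by grind) h
    · exact star a b c c' a' b' (by grind) (by grind) (by grind) (by grind) h
    · exact star a c b a' b' c' (by grind) (by grind) (by grind) (by grind) h
    · exact star a c b b' a' c' (by grind) (by grind) (by grind) (by grind) h
    · exact star a c b c' a' b' (by grind) (by grind) (by grind) (by grind) h
    · exact star b c a a' b' c' (by grind) (by grind) (by grind) (by grind) h
    · exact star b c a b' a' c' (by grind) (by grind) (by grind) (by grind) h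
    · exact star b c a c' a' b' (by grind) (by grind) (by grind) (by grind) h
  · rintro a b c (rfl | rfl | rfl)
    · simp [hσabs, hτabs]
    · rw [(hσsymm a b a).1, (hτsymm a b a).1, hσabs, hτabs, Set.pair_comm b a, Set.insert_comm]
      simp [Set.pair_comm]
    · rw [(hσsymm a b b).2.2.1, (hτsymm a b b).2.2.1, hσabs, hτabs, Set.pair_comm]
      simp
end
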